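/- arXiv:0804.1653 — 2 statements merged into one kernel-verified Lean document; each statement's English description precedes it below -/
import Mathlib

section
/- Let q ∈ [0,1), let π = (π_1,…,π_m) be a weight vector in the simplex Δ^{m-1}, and let p_1,…,p_m be probability vectors in Δ^{n-1}. Then the Jensen-Tsallis q-difference satisfies the lower bound T_q^π(p_1,…,p_m) ≥ S_q(π)·(1 − n^{1−q}). -/
open Finset

/-- The Tsallis `q`-entropy of a finite nonnegative vector `p`:
`S_q(p) = (1/(q-1)) * (1 - ∑ i, p i ^ q)`. -/
noncomputable def tsallisEntropy {ι : Type*} [Fintype ι] (q : ℝ) (p : ι → ℝ) : ℝ :=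
  (1 / (q - 1)) * (1 - ∑ i, p i ^ q)

/-- The Jensen-Tsallis `q`-difference of `p₁,…,p_m` with weights `π`:
`T_q^π(p₁,…,p_m) = S_q(∑ⱼ πⱼ pⱼ) - ∑ⱼ πⱼ^q S_q(pⱼ)`. -/
noncomputable def jensenTsallis {n m : ℕ} (q : ℝ) (π : Fin m → ℝ)
    (p : Fin m → Fin n → ℝ) : ℝ :=
  tsallisEntropy q (∑ j, π j • p j) - ∑ j, π j ^ q * tsallisEntropy q (p j)

/-!
Concavity of `S_q` bounds the `q`-difference below by `∑ j, (π j - π j ^ q) * S_q (p j)`. For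
`q < 1` the coefficients are nonpositive with sum `(q - 1) * S_q π`, while `S_q (p j)` is at most
the entropy `(1 - n ^ (1 - q)) / (q - 1)` of the uniform distribution.
-/

section TsallisEntropy

variable {ι : Type*} [Fintype ι] {q : ℝ} {p : ι → ℝ}

theorem concaveOn_one_div_one_sub_mul_rpow (hq : 0 ≤ q) :
    ConcaveOn ℝ (Set.Ici 0) fun x : ℝ ↦ 1 / (1 - q) * x ^ q := by
  rcases le_total q 1 with hq1 | hq1
  · exact (Real.concaveOn_rpow hq hq1).smul (one_div_nonneg.2 (sub_nonneg.2 hq1))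
  · have hc : 0 ≤ -(1 / (1 - q)) := neg_nonneg.2 (one_div_nonpos.2 (sub_nonpos.2 hq1))
    refine neg_convexOn_iff.1 (((convexOn_rpow hq1).smul hc).congr fun x _ ↦ ?_)
    simp

theorem tsallisEntropy_eq_sum_sub (q : ℝ) (p : ι → ℝ) :
    tsallisEntropy q p = ∑ i, 1 / (1 - q) * p i ^ q - 1 / (1 - q) := by
  rw [tsallisEntropy, ← neg_sub 1 q, div_neg, ← Finset.mul_sum]
  ring

theorem concaveOn_tsallisEntropy (hq : 0 ≤ q) :
    ConcaveOn ℝ (Set.Ici 0) (tsallisEntropy q : (ι → ℝ) → ℝ) := by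
  have hterm (i : ι) : ConcaveOn ℝ (Set.Ici 0) fun p : ι → ℝ ↦ 1 / (1 - q) * p i ^ q :=
    ((concaveOn_one_div_one_sub_mul_rpow hq).comp_linearMap
      (LinearMap.proj i : (ι → ℝ) →ₗ[ℝ] ℝ)).subset
      (fun _ hp ↦ hp i) (convex_Ici 0)
  have hsum : ConcaveOn ℝ (Set.Ici 0) (∑ i, fun p : ι → ℝ ↦ 1 / (1 - q) * p i ^ q) :=
    Finset.sum_induction _ (ConcaveOn ℝ (Set.Ici 0)) (fun _ _ ↦ ConcaveOn.add)
      (concaveOn_const 0 (convex_Ici 0)) fun i _ ↦ hterm i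
  refine (hsum.add_const (-(1 / (1 - q)))).congr fun p _ ↦ ?_
  simp only [tsallisEntropy_eq_sum_sub, Pi.add_apply, Finset.sum_apply, sub_eq_add_neg]

theorem sum_sub_rpow_eq_mul_tsallisEntropy (hq : q ≠ 1) (hp : ∑ i, p i = 1) :
    ∑ i, (p i - p i ^ q) = (q - 1) * tsallisEntropy q p := by
  rw [Finset.sum_sub_distrib, hp, tsallisEntropy, ← mul_assoc,
    mul_one_div_cancel (sub_ne_zero.2 hq), one_mul]

theorem tsallisEntropy_const_inv_card (hq : q ≠ 1) :
    tsallisEntropy q (fun _ : ι ↦ (Fintype.card ι : ℝ)⁻¹) =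
      1 / (q - 1) * (1 - (Fintype.card ι : ℝ) ^ (1 - q)) := by
  rw [Real.rpow_sub' (Nat.cast_nonneg _) (sub_ne_zero.2 hq.symm), Real.rpow_one]
  simp [tsallisEntropy, Real.inv_rpow, div_eq_mul_inv]

theorem tsallisEntropy_le_const_inv_card (hq : 0 ≤ q) (hp : p ∈ stdSimplex ℝ ι) :
    tsallisEntropy q p ≤ tsallisEntropy q fun _ : ι ↦ (Fintype.card ι : ℝ)⁻¹ := by
  have : Nonempty ι := not_isEmpty_iff.1 fun _ ↦ by simpa using hp.2
  have hcard : (0 : ℝ) < Fintype.card ι := Nat.cast_pos.2 Fintype.card_pos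
  have hjensen : (Fintype.card ι : ℝ)⁻¹ * ∑ i, 1 / (1 - q) * p i ^ q ≤
      1 / (1 - q) * (Fintype.card ι : ℝ)⁻¹ ^ q := by
    simpa [← Finset.mul_sum, hp.2] using
      (concaveOn_one_div_one_sub_mul_rpow hq).le_map_sum (t := univ)
        (w := fun _ : ι ↦ (Fintype.card ι : ℝ)⁻¹) (p := p)
        (fun _ _ ↦ (inv_pos.2 hcard).le) (by simp) (fun i _ ↦ hp.1 i)
  simp only [tsallisEntropy_eq_sum_sub, Finset.sum_const, Finset.card_univ, nsmul_eq_mul]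
  gcongr
  exact (inv_mul_le_iff₀ hcard).1 hjensen

end TsallisEntropy

theorem sum_sub_rpow_mul_tsallisEntropy_le_jensenTsallis {n m : ℕ} {q : ℝ} (hq : 0 ≤ q)
    {π : Fin m → ℝ} (hπ : π ∈ stdSimplex ℝ (Fin m))
    {p : Fin m → Fin n → ℝ} (hp : ∀ j, 0 ≤ p j) :
    ∑ j, (π j - π j ^ q) * tsallisEntropy q (p j) ≤ jensenTsallis q π p := by
  have hjensen : ∑ j, π j * tsallisEntropy q (p j) ≤ tsallisEntropy q (∑ j, π j • p j) :=
    (concaveOn_tsallisEntropy hq).le_map_sum (fun j _ ↦ hπ.1 j) hπ.2 fun j _ ↦ hp j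
  simp only [sub_mul, Finset.sum_sub_distrib, jensenTsallis]
  gcongr

/-- For `q ∈ [0,1)`, the Jensen-Tsallis `q`-difference is bounded below by
`S_q(π) * (1 - n^(1-q))`. -/
theorem jensenTsallis_lower_bound (n m : ℕ) (q : ℝ) (hq0 : 0 ≤ q) (hq1 : q < 1)
    (π : Fin m → ℝ) (hπ0 : ∀ j, 0 ≤ π j) (hπ1 : ∑ j, π j = 1)
    (p : Fin m → Fin n → ℝ) (hp0 : ∀ j k, 0 ≤ p j k) (hp1 : ∀ j, ∑ k, p j k = 1) :
    tsallisEntropy q π * (1 - (n : ℝ) ^ (1 - q)) ≤ jensenTsallis q π p := by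
  have hcoeff (j : Fin m) : π j - π j ^ q ≤ 0 :=
    sub_nonpos.2 <| Real.self_le_rpow_of_le_one (hπ0 j)
      (mem_Icc_of_mem_stdSimplex ⟨hπ0, hπ1⟩ j).2 hq1.le
  have hmax (j : Fin m) : tsallisEntropy q (p j) ≤ 1 / (q - 1) * (1 - (n : ℝ) ^ (1 - q)) := by
    have h := tsallisEntropy_le_const_inv_card hq0 ⟨hp0 j, hp1 j⟩
    rwa [tsallisEntropy_const_inv_card hq1.ne, Fintype.card_fin] at h
  calc
    tsallisEntropy q π * (1 - (n : ℝ) ^ (1 - q))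
      = (∑ j, (π j - π j ^ q)) * (1 / (q - 1) * (1 - (n : ℝ) ^ (1 - q))) := by
        rw [sum_sub_rpow_eq_mul_tsallisEntropy hq1.ne hπ1]
        field_simp [sub_ne_zero.2 hq1.ne]
    _ = ∑ j, (π j - π j ^ q) * (1 / (q - 1) * (1 - (n : ℝ) ^ (1 - q))) := Finset.sum_mul ..
    _ ≤ ∑ j, (π j - π j ^ q) * tsallisEntropy q (p j) :=
        Finset.sum_le_sum fun j _ ↦ mul_le_mul_of_nonpos_left (hmax j) (hcoeff j)
    _ ≤ jensenTsallis q π p :=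
        sum_sub_rpow_mul_tsallisEntropy_le_jensenTsallis hq0 ⟨hπ0, hπ1⟩ hp0
end

section
/- Let q ∈ [0,2], q ≠ 1, let π = (π_1,…,π_m) be a weight vector in the simplex Δ^{m-1}, and fix probability vectors p_2,…,p_m ∈ Δ^{n-1}. Then the map p_1 ↦ T_q^π(p_1, p_2, …, p_m) is convex on Δ^{n-1}; i.e., the Jensen-Tsallis q-difference is convex in each argument separately for q ∈ [0,2]. -/
open Finset

/-!
In the argument `x` with weight `w`, up to a constant, the difference is `S_q(w x + c) - S_q(w x)`
where `c` is the weighted sum of the other arguments. Coordinatewise this is `f y - f (y + c)` with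
`f y = y ^ q / (q - 1)`. As `f'' y = q * y ^ (q - 2)` is antitone for `0 ≤ q ≤ 2`, the second
derivative of `f y - f (y + c)` is nonnegative.
-/

theorem convexOn_sum {𝕜 E β ι : Type*} [Semiring 𝕜] [PartialOrder 𝕜] [AddCommMonoid E] [SMul 𝕜 E]
    [AddCommMonoid β] [PartialOrder β] [IsOrderedAddMonoid β] [DistribMulAction 𝕜 β]
    {s : Set E} {t : Finset ι} {f : ι → E → β} (hs : Convex 𝕜 s)
    (hf : ∀ i ∈ t, ConvexOn 𝕜 s (f i)) : ConvexOn 𝕜 s fun x => ∑ i ∈ t, f i x := by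
  refine ⟨hs, fun x hx y hy a b ha hb hab => ?_⟩
  rw [smul_sum, smul_sum, ← sum_add_distrib]
  exact sum_le_sum fun i hi => (hf i hi).2 hx hy ha hb hab

theorem convexOn_sub_comp_add_const_of_antitoneOn_deriv2 {f f' f'' : ℝ → ℝ} {a c : ℝ}
    (hf : ContinuousOn f (Set.Ici a)) (hf' : ∀ x ∈ Set.Ioi a, HasDerivAt f (f' x) x)
    (hf'' : ∀ x ∈ Set.Ioi a, HasDerivAt f' (f'' x) x) (hanti : AntitoneOn f'' (Set.Ioi a))
    (hc : 0 ≤ c) : ConvexOn ℝ (Set.Ici a) fun x => f x - f (x + c) := by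
  have shift_mem_Ici : Set.MapsTo (· + c) (Set.Ici a) (Set.Ici a) :=
    fun _ hx => le_add_of_le_of_nonneg hx hc
  have shift_mem_Ioi : Set.MapsTo (· + c) (Set.Ioi a) (Set.Ioi a) :=
    fun _ hx => lt_add_of_lt_of_nonneg hx hc
  refine convexOn_of_hasDerivWithinAt2_nonneg (convex_Ici a)
    (f' := fun x => f' x - f' (x + c)) (f'' := fun x => f'' x - f'' (x + c))
    (hf.sub (hf.comp (by fun_prop) shift_mem_Ici)) ?_ ?_ ?_
  all_goals
    rw [interior_Ici]
    intro x hx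
  · exact ((hf' x hx).sub ((hf' _ (shift_mem_Ioi hx)).comp_add_const x c)).hasDerivWithinAt
  · exact ((hf'' x hx).sub ((hf'' _ (shift_mem_Ioi hx)).comp_add_const x c)).hasDerivWithinAt
  · exact sub_nonneg.2 (hanti hx (shift_mem_Ioi hx) (le_add_of_nonneg_right hc))

theorem convexOn_rpow_div_sub_add_const_rpow_div {q c : ℝ} (hq0 : 0 ≤ q) (hq2 : q ≤ 2)
    (hq1 : q ≠ 1) (hc : 0 ≤ c) :
    ConvexOn ℝ (Set.Ici 0) fun y : ℝ => y ^ q / (q - 1) - (y + c) ^ q / (q - 1) := by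
  have hq1' : q - 1 ≠ 0 := sub_ne_zero.2 hq1
  refine convexOn_sub_comp_add_const_of_antitoneOn_deriv2 (f := fun y => y ^ q / (q - 1))
    (f' := fun y => q * y ^ (q - 1) / (q - 1)) (f'' := fun y => q * y ^ (q - 2))
    ((Real.continuous_rpow_const hq0).div_const _).continuousOn
    (fun y hy => ?_) (fun y hy => ?_) ?_ hc
  · exact (Real.hasDerivAt_rpow_const (Or.inl (ne_of_gt hy))).div_const _
  · have hderiv : HasDerivAt (fun y => y ^ (q - 1)) ((q - 1) * y ^ (q - 1 - 1)) y :=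
      Real.hasDerivAt_rpow_const (Or.inl (ne_of_gt hy))
    refine ((hderiv.const_mul q).div_const (q - 1)).congr_deriv ?_
    rw [show q - 1 - 1 = q - 2 by ring]
    field_simp
  · intro x hx y hy hxy
    exact mul_le_mul_of_nonneg_left
      (Real.antitoneOn_rpow_Ioi_of_exponent_nonpos (sub_nonpos.2 hq2) hx hy hxy) hq0

section

variable {ι : Type*} [Fintype ι]

theorem tsallisEntropy_add_sub_tsallisEntropy (q : ℝ) (x c : ι → ℝ) :
    tsallisEntropy q (x + c) - tsallisEntropy q x =
      ∑ k, (x k ^ q / (q - 1) - (x k + c k) ^ q / (q - 1)) := by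
  simp only [tsallisEntropy, Pi.add_apply, sum_sub_distrib, ← sum_div]
  ring

theorem convexOn_tsallisEntropy_add_sub_tsallisEntropy {q : ℝ} (hq0 : 0 ≤ q) (hq2 : q ≤ 2)
    (hq1 : q ≠ 1) {c : ι → ℝ} (hc : 0 ≤ c) :
    ConvexOn ℝ (Set.Ici 0) fun x : ι → ℝ => tsallisEntropy q (x + c) - tsallisEntropy q x := by
  simp only [tsallisEntropy_add_sub_tsallisEntropy]
  refine convexOn_sum (convex_Ici 0) fun k _ => ?_
  exact ((convexOn_rpow_div_sub_add_const_rpow_div hq0 hq2 hq1 (hc k)).comp_linearMap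
    (LinearMap.proj k : (ι → ℝ) →ₗ[ℝ] ℝ)).subset (fun x hx => hx k) (convex_Ici 0)

theorem rpow_mul_tsallisEntropy (q : ℝ) {r : ℝ} (hr : 0 ≤ r) {x : ι → ℝ} (hx : 0 ≤ x) :
    r ^ q * tsallisEntropy q x = tsallisEntropy q (r • x) + (r ^ q - 1) / (q - 1) := by
  simp only [tsallisEntropy, Pi.smul_apply, smul_eq_mul, Real.mul_rpow hr (hx _), ← mul_sum]
  ring

end

theorem jensenTsallis_update {n m : ℕ} (q : ℝ) {π : Fin m → ℝ} {j : Fin m} (hπ : 0 ≤ π j)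
    (p : Fin m → Fin n → ℝ) {x : Fin n → ℝ} (hx : 0 ≤ x) :
    jensenTsallis q π (Function.update p j x) =
      tsallisEntropy q (π j • x + ∑ i ∈ univ \ {j}, π i • p i) - tsallisEntropy q (π j • x) -
        ((π j ^ q - 1) / (q - 1) + ∑ i ∈ univ \ {j}, π i ^ q * tsallisEntropy q (p i)) := by
  have hmixture := Function.apply_update (fun i y => π i • y) p j x
  have hentropy := Function.apply_update (fun i y => π i ^ q * tsallisEntropy q y) p j x
  simp only [jensenTsallis, hmixture, hentropy, sum_update_of_mem (mem_univ j),
    rpow_mul_tsallisEntropy q hπ hx]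
  ring

theorem jensenTsallis_convexOn_first_arg_general {n m : ℕ} {q : ℝ} (hq0 : 0 ≤ q) (hq2 : q ≤ 2)
    (hq1 : q ≠ 1) {π : Fin m → ℝ} (hπ : 0 ≤ π) {p : Fin m → Fin n → ℝ} {j : Fin m}
    (hp : ∀ i ≠ j, 0 ≤ p i) :
    ConvexOn ℝ (Set.Ici 0) fun x => jensenTsallis q π (Function.update p j x) := by
  have hrest : 0 ≤ ∑ i ∈ univ \ {j}, π i • p i :=
    sum_nonneg fun i hi => smul_nonneg (hπ i) (hp i (by simpa using hi))
  have hdiff := ((convexOn_tsallisEntropy_add_sub_tsallisEntropy hq0 hq2 hq1 hrest).comp_linearMap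
    (LinearMap.lsmul ℝ _ (π j))).subset (fun _ hx => smul_nonneg (hπ j) hx) (convex_Ici 0)
  exact (hdiff.sub (concaveOn_const _ (convex_Ici 0))).congr fun x hx =>
    (jensenTsallis_update q (hπ j) p hx).symm

/-- For `q ∈ [0,2]`, the Jensen-Tsallis `q`-difference is convex in each argument
separately: with the remaining arguments `p₂,…,p_m` fixed in the simplex, the map
`p₁ ↦ T_q^π(p₁,p₂,…,p_m)` is convex on the simplex. -/
theorem jensenTsallis_convexOn_first_arg (n m : ℕ) (q : ℝ)
    (hq0 : 0 ≤ q) (hq2 : q ≤ 2) (hq1 : q ≠ 1)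
    (π : Fin (m + 1) → ℝ) (hπ0 : ∀ j, 0 ≤ π j) (hπ1 : ∑ j, π j = 1)
    (ps : Fin m → Fin n → ℝ) (hps0 : ∀ j k, 0 ≤ ps j k) (hps1 : ∀ j, ∑ k, ps j k = 1) :
    ConvexOn ℝ {p : Fin n → ℝ | (∀ k, 0 ≤ p k) ∧ ∑ k, p k = 1}
      (fun p₁ => jensenTsallis q π (Fin.cons p₁ ps)) := by
  have hconvex := jensenTsallis_convexOn_first_arg_general hq0 hq2 hq1 hπ0
    (p := Fin.cons 0 ps) (j := 0) (Fin.cases (absurd rfl) fun j _ => hps0 j)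
  simp only [Fin.update_cons_zero] at hconvex
  exact hconvex.subset (fun _ hp => hp.1) (convex_stdSimplex ℝ (Fin n))
end
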